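/- (Example: negative binomial distribution.) Let c > 0, p ∈ (0, 1), q = 1 − p, and ψ(z) = c·log p − c·log(1 − q e^{iz}) (principal branch of the logarithm). Then for every z ∈ ℝ, ρ̂(z) = ∫_{−1}^{1} (ψ(z) − ψ(z+λ)) dλ = 2c ∑_{k=1}^{∞} (q^k (k − sin k)/k²) e^{ikz}. -/

import Mathlib

open MeasureTheory

/-!
Each mode `t ↦ exp (i ω t)` is an eigenfunction of `ψ ↦ ∫ t in -h..h, (ψ z - ψ (z + t))`, with
eigenvalue `2h (1 - sinc (ω h))`, because averaging `exp (i ω t)` over `[-h, h]` gives `sinc (ω h)`.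
Up to an additive constant, which the operator kills, the exponent of the negative binomial law is
the absolutely convergent Fourier series `c ∑ (q ^ k / k) exp (i k z)`, so the operator may be
applied term by term.
-/

lemma integral_exp_I_mul_eq_sinc (ω h : ℝ) :
    ∫ t in -h..h, Complex.exp (Complex.I * ω * t) = 2 * h * Real.sinc (ω * h) := by
  rcases eq_or_ne ω 0 with rfl | hω
  · simp [two_mul]
  calc ∫ t in -h..h, Complex.exp (Complex.I * ω * t)
      = ∫ t in -h..h, Complex.exp ((ω * t : ℝ) * Complex.I) := by
        simp only [Complex.ofReal_mul, mul_comm, mul_left_comm]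
    _ = ω⁻¹ • (2 * (ω * h : ℝ) * Real.sinc (ω * h) : ℂ) := by
        rw [intervalIntegral.integral_comp_mul_left
          (fun x : ℝ ↦ Complex.exp (x * Complex.I)) hω, mul_neg, integral_exp_mul_I_eq_sinc]
    _ = 2 * h * Real.sinc (ω * h) := by
        rw [Complex.real_smul]
        push_cast
        field [Complex.ofReal_ne_zero.mpr hω]

lemma integral_exp_sub_exp_add (ω h z : ℝ) :
    ∫ t in -h..h, (Complex.exp (Complex.I * ω * z) - Complex.exp (Complex.I * ω * (z + t : ℝ))) =
      2 * h * (1 - Real.sinc (ω * h)) * Complex.exp (Complex.I * ω * z) := by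
  have factor (t : ℝ) :
      Complex.exp (Complex.I * ω * z) - Complex.exp (Complex.I * ω * (z + t : ℝ)) =
        Complex.exp (Complex.I * ω * z) * (1 - Complex.exp (Complex.I * ω * t)) := by
    rw [Complex.ofReal_add, mul_add, Complex.exp_add]
    ring
  simp only [factor]
  rw [intervalIntegral.integral_const_mul, intervalIntegral.integral_sub (by simp)
    (Continuous.intervalIntegrable (by fun_prop) _ _), integral_exp_I_mul_eq_sinc]
  simp only [intervalIntegral.integral_const, Complex.real_smul]
  push_cast
  ring

lemma hasSum_integral_sub_add_of_hasSum_exp {ι : Type*} [Countable ι]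
    {a : ι → ℂ} {ω : ι → ℝ} {f : ℝ → ℂ}
    (hf : ∀ z : ℝ, HasSum (fun i ↦ a i * Complex.exp (Complex.I * ω i * z)) (f z)) (h z : ℝ) :
    HasSum (fun i ↦ a i * (2 * h * (1 - Real.sinc (ω i * h)) * Complex.exp (Complex.I * ω i * z)))
      (∫ t in -h..h, (f z - f (z + t))) := by
  have norm_exp (i : ι) (x : ℝ) : ‖Complex.exp (Complex.I * ω i * x)‖ = 1 := by
    simpa [mul_assoc] using Complex.norm_exp_I_mul_ofReal (ω i * x)
  -- At `z = 0` the series is `∑ a i`, and in `ℂ` unconditional convergence is absolute.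
  have summable_norm : Summable fun i ↦ ‖a i‖ := by
    simpa using (hf 0).summable.norm
  have termwise := intervalIntegral.hasSum_integral_of_dominated_convergence (μ := volume)
    (a := -h) (b := h) (f := fun t ↦ f z - f (z + t))
    (F := fun i t ↦ a i *
      (Complex.exp (Complex.I * ω i * z) - Complex.exp (Complex.I * ω i * (z + t : ℝ))))
    (fun i _ ↦ ‖a i‖ * 2)
    (fun i ↦ Continuous.aestronglyMeasurable (by fun_prop))
    (fun i ↦ .of_forall fun t _ ↦ by
      rw [norm_mul]
      gcongr
      exact (norm_sub_le _ _).trans_eq (by rw [norm_exp, norm_exp, one_add_one_eq_two]))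
    (.of_forall fun _ _ ↦ summable_norm.mul_right 2)
    intervalIntegrable_const
    (.of_forall fun t _ ↦ by simpa only [mul_sub] using (hf z).sub (hf (z + t)))
  simpa only [intervalIntegral.integral_const_mul, integral_exp_sub_exp_add] using termwise

lemma hasSum_pnat_neg_log_one_sub {w : ℂ} (hw : ‖w‖ < 1) :
    HasSum (fun k : ℕ+ ↦ w ^ (k : ℕ) / (k : ℕ)) (-Complex.log (1 - w)) := by
  refine (PNat.coe_injective.hasSum_iff fun n hn ↦ ?_).mpr (Complex.hasSum_taylorSeries_neg_log hw)
  have hn0 : n = 0 := by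
    by_contra hn0
    exact hn ⟨⟨n, Nat.pos_of_ne_zero hn0⟩, rfl⟩
  simp [hn0]

lemma hasSum_neg_log_one_sub_mul_exp {q : ℂ} (hq : ‖q‖ < 1) (z : ℝ) :
    HasSum (fun k : ℕ+ ↦ q ^ (k : ℕ) / (k : ℕ) * Complex.exp (Complex.I * ((k : ℕ) : ℝ) * z))
      (-Complex.log (1 - q * Complex.exp (Complex.I * z))) := by
  have norm_lt : ‖q * Complex.exp (Complex.I * z)‖ < 1 := by
    rwa [norm_mul, Complex.norm_exp_I_mul_ofReal, mul_one]
  refine (hasSum_pnat_neg_log_one_sub norm_lt).congr_fun fun k ↦ ?_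
  rw [mul_pow, ← Complex.exp_nat_mul, Complex.ofReal_natCast, mul_left_comm, ← mul_assoc]
  ring

lemma mul_one_sub_sinc_mul {ω : ℝ} (hω : ω ≠ 0) (h : ℝ) :
    h * (1 - Real.sinc (ω * h)) = (h * ω - Real.sin (h * ω)) / ω := by
  rcases eq_or_ne h 0 with rfl | hh
  · simp
  rw [Real.sinc_of_ne_zero (mul_ne_zero hω hh), mul_comm ω h]
  field

theorem statement11_general (a c q : ℂ) (hq : ‖q‖ < 1) (ψ : ℝ → ℂ)
    (hψ : ∀ z : ℝ, ψ z = a - c * Complex.log (1 - q * Complex.exp (Complex.I * z))) (h z : ℝ) :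
    HasSum (fun k : ℕ+ ↦ 2 * c *
        ((q ^ (k : ℕ) * ((h * (k : ℕ) - Real.sin (h * (k : ℕ)) : ℝ) : ℂ) / ((k : ℕ) : ℂ) ^ 2) *
          Complex.exp (Complex.I * ((k : ℕ) : ℂ) * z)))
      (∫ t in -h..h, (ψ z - ψ (z + t))) := by
  have cancel_const (t : ℝ) : ψ z - ψ (z + t) =
      c * (-Complex.log (1 - q * Complex.exp (Complex.I * z)) -
        -Complex.log (1 - q * Complex.exp (Complex.I * (z + t : ℝ)))) := by
    rw [hψ, hψ]
    ring
  simp only [cancel_const, intervalIntegral.integral_const_mul]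
  have fourier_series := hasSum_neg_log_one_sub_mul_exp hq
  refine ((hasSum_integral_sub_add_of_hasSum_exp fourier_series h z).mul_left c).congr_fun
    fun k ↦ ?_
  have hk : ((k : ℕ) : ℝ) ≠ 0 := Nat.cast_ne_zero.mpr k.ne_zero
  have eigenvalue := congrArg ((↑) : ℝ → ℂ) (mul_one_sub_sinc_mul hk h)
  push_cast at eigenvalue ⊢
  linear_combination
    -(2 * c * (q ^ (k : ℕ) / (k : ℕ)) * Complex.exp (Complex.I * (k : ℕ) * z)) * eigenvalue

/-- **negative binomial distribution.** For `c > 0`, `p ∈ (0,1)`,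
`q = 1 − p`, and `ψ(z) = c·log p − c·log(1 − q e^{iz})` (principal branch),
`ρ̂(z) = ∫_{−1}^{1} (ψ(z) − ψ(z+λ)) dλ = 2c ∑_{k=1}^{∞} (q^k (k − sin k)/k²) e^{ikz}`. -/
theorem statement11 (c p q : ℝ) (hc : 0 < c) (hp0 : 0 < p) (hp1 : p < 1) (hq : q = 1 - p)
    (ψ : ℝ → ℂ)
    (hψ : ∀ z : ℝ, ψ z = (c : ℂ) * (Real.log p : ℂ)
      - (c : ℂ) * Complex.log (1 - (q : ℂ) * Complex.exp (Complex.I * (z : ℂ)))) :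
    ∀ z : ℝ, (∫ t in (-1 : ℝ)..1, (ψ z - ψ (z + t)))
      = 2 * (c : ℂ) * ∑' k : ℕ+,
          ((q : ℂ) ^ (k : ℕ) * ((((k : ℕ) : ℝ) - Real.sin ((k : ℕ) : ℝ) : ℝ) : ℂ)
            / ((k : ℕ) : ℂ) ^ 2) *
          Complex.exp (Complex.I * ((k : ℕ) : ℂ) * (z : ℂ)) := by
  intro z
  have norm_q_lt : ‖(q : ℂ)‖ < 1 := by
    rw [Complex.norm_real, Real.norm_eq_abs, abs_lt]
    constructor <;> linarith
  simpa only [one_mul, tsum_mul_left] using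
    (statement11_general (c * Real.log p) c q norm_q_lt ψ hψ 1 z).tsum_eq.symm
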